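/- (Centroid identity for a cluster.) Let x* = (x_1*,…,x_n*) be the minimizer of the sum-of-norms clustering objective with points a_1,…,a_n ∈ ℝ^d and parameter λ > 0. Suppose C ⊆ {1,…,n} is nonempty and x̂ ∈ ℝ^d satisfy x_i* = x̂ for all i ∈ C and x_i* ≠ x̂ for all i ∉ C. Then λ·Σ_{j∉C} (x̂ − x_j*)/‖x̂ − x_j*‖ = −x̂ + (1/|C|)·Σ_{l∈C} a_l. -/

import Mathlib

open Finset

/-- The sum-of-norms clustering objective. -/
noncomputable def sonObjective {d n : ℕ} (a : Fin n → EuclideanSpace ℝ (Fin d)) (lam : ℝ)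
    (x : Fin n → EuclideanSpace ℝ (Fin d)) : ℝ :=
  (1 / 2) * ∑ i, ‖x i - a i‖ ^ 2 + lam * ∑ i, ∑ j, if i < j then ‖x i - x j‖ else 0

/-!
The norm is not differentiable at `0`, so the objective is not differentiable at a minimizer with
nontrivial clusters. It becomes differentiable once the points of the cluster `C` are only allowed
to move together: the terms within `C` then vanish identically, and up to a constant what is left
is the function `z ↦ ½ ∑_{i ∈ C} ‖z - a i‖² + λ |C| ∑_{j ∉ C} ‖z - x j‖` of the common position `z`,
which is smooth near `x̂`. Its gradient vanishes at `x̂`, and dividing by `|C|` gives the identity.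
-/

section PairSums

variable {ι : Type*} [Fintype ι] {f : ι → ι → ℝ}

theorem sum_sum_eq_two_mul_sum_sum_lt [LinearOrder ι] (hsymm : ∀ i j, f i j = f j i)
    (hdiag : ∀ i, f i i = 0) :
    ∑ i, ∑ j, f i j = 2 * ∑ i, ∑ j, if i < j then f i j else 0 := by
  have split_by_order : ∀ i j,
      f i j = (if i < j then f i j else 0) + if j < i then f j i else 0 := by
    intro i j
    rcases lt_trichotomy i j with h | rfl | h
    · simp [h, h.not_gt]
    · simp [hdiag]
    · simp [h, h.not_gt, hsymm i j]
  calc ∑ i, ∑ j, f i j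
      = (∑ i, ∑ j, if i < j then f i j else 0) + ∑ i, ∑ j, if j < i then f j i else 0 := by
        simp_rw [← sum_add_distrib, ← split_by_order]
    _ = 2 * ∑ i, ∑ j, if i < j then f i j else 0 := by
        rw [sum_comm (f := fun i j => if j < i then f j i else 0), two_mul]

theorem sum_sum_eq_sum_sum_add_compl [DecidableEq ι] (hsymm : ∀ i j, f i j = f j i)
    (C : Finset ι) :
    ∑ i, ∑ j, f i j =
      ∑ i ∈ C, ∑ j ∈ C, f i j + 2 * ∑ i ∈ C, ∑ j ∈ Cᶜ, f i j + ∑ i ∈ Cᶜ, ∑ j ∈ Cᶜ, f i j := by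
  have cross_symm : ∑ i ∈ Cᶜ, ∑ j ∈ C, f i j = ∑ i ∈ C, ∑ j ∈ Cᶜ, f i j := by
    rw [sum_comm]
    simp_rw [hsymm]
  simp_rw [← sum_add_sum_compl C, sum_add_distrib]
  rw [cross_symm]
  ring

end PairSums

section Objective

variable {ι E : Type*} [Fintype ι] [SeminormedAddCommGroup E]

/-- The sum-of-norms clustering objective for a finite family of points of a seminormed group. The
double sum runs over ordered pairs, so that no order on the index type is needed; it counts every
unordered pair twice, whence the factor `lam / 2`. -/
noncomputable def sumOfNormsObjective (a : ι → E) (lam : ℝ) (x : ι → E) : ℝ :=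
  1 / 2 * ∑ i, ‖x i - a i‖ ^ 2 + lam / 2 * ∑ i, ∑ j, ‖x i - x j‖

theorem sonObjective_eq_sumOfNormsObjective {d n : ℕ} (a : Fin n → EuclideanSpace ℝ (Fin d))
    (lam : ℝ) : sonObjective a lam = sumOfNormsObjective a lam := by
  funext x
  rw [sonObjective, sumOfNormsObjective,
    sum_sum_eq_two_mul_sum_sum_lt (fun i j => norm_sub_rev (x i) (x j)) (by simp)]
  ring

variable [DecidableEq ι]

/-- The part of the sum-of-norms objective that depends on the common position `z` of the points
indexed by `C`, when every point `x j` with `j ∉ C` is held fixed. -/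
noncomputable def clusterObjective (a : ι → E) (lam : ℝ) (x : ι → E) (C : Finset ι) (z : E) : ℝ :=
  1 / 2 * ∑ i ∈ C, ‖z - a i‖ ^ 2 + lam * (#C * ∑ j ∈ Cᶜ, ‖z - x j‖)

theorem sumOfNormsObjective_piecewise (a : ι → E) (lam : ℝ) (x : ι → E) (C : Finset ι) (z : E) :
    sumOfNormsObjective a lam (C.piecewise (fun _ => z) x) =
      clusterObjective a lam x C z +
        sumOfNormsObjective (fun j : ↥Cᶜ => a j) lam (fun j => x j) := by
  set y := C.piecewise (fun _ => z) x
  have y_mem : ∀ i ∈ C, y i = z := fun i hi => piecewise_eq_of_mem _ _ _ hi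
  have y_compl : ∀ i ∈ Cᶜ, y i = x i := fun i hi =>
    piecewise_eq_of_notMem _ _ _ (mem_compl.mp hi)
  have fidelity : ∑ i, ‖y i - a i‖ ^ 2 =
      ∑ i ∈ C, ‖z - a i‖ ^ 2 + ∑ i : ↥Cᶜ, ‖x i - a i‖ ^ 2 := by
    rw [← sum_add_sum_compl C, sum_coe_sort Cᶜ fun i => ‖x i - a i‖ ^ 2]
    congr 1 <;> refine sum_congr rfl fun i hi => ?_
    · rw [y_mem i hi]
    · rw [y_compl i hi]
  have within : ∑ i ∈ C, ∑ j ∈ C, ‖y i - y j‖ = 0 :=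
    sum_eq_zero fun i hi => sum_eq_zero fun j hj => by simp [y_mem i hi, y_mem j hj]
  have across : ∑ i ∈ C, ∑ j ∈ Cᶜ, ‖y i - y j‖ = #C * ∑ j ∈ Cᶜ, ‖z - x j‖ := by
    rw [← nsmul_eq_mul]
    exact sum_eq_card_nsmul fun i hi => sum_congr rfl fun j hj => by rw [y_mem i hi, y_compl j hj]
  have outside : ∑ i ∈ Cᶜ, ∑ j ∈ Cᶜ, ‖y i - y j‖ = ∑ i : ↥Cᶜ, ∑ j : ↥Cᶜ, ‖x i - x j‖ := by
    simp_rw [← sum_coe_sort Cᶜ, y_compl _ (Subtype.property _)]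
  simp only [sumOfNormsObjective, clusterObjective, fidelity,
    sum_sum_eq_sum_sum_add_compl (fun i j => norm_sub_rev (y i) (y j)) C, within, across, outside]
  ring

theorem isLocalMin_clusterObjective {a x : ι → E} {lam : ℝ} {C : Finset ι} {z : E}
    (hx : IsLocalMin (sumOfNormsObjective a lam) x) (hxC : ∀ i ∈ C, x i = z) :
    IsLocalMin (clusterObjective a lam x C) z := by
  let moveCluster : E → ι → E := fun w => C.piecewise (fun _ => w) x
  have moveCluster_self : moveCluster z = x := by
    rw [← C.piecewise_same x]
    exact C.piecewise_congr (fun i hi => (hxC i hi).symm) fun _ _ => rfl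
  have moveCluster_continuous : Continuous moveCluster := continuous_pi fun i => by
    by_cases hi : i ∈ C
    · simpa only [moveCluster, piecewise_eq_of_mem _ _ _ hi] using continuous_id'
    · simpa only [moveCluster, piecewise_eq_of_notMem _ _ _ hi] using continuous_const
  rw [← moveCluster_self] at hx
  simpa only [IsLocalMin, IsMinFilter, Function.comp_apply, moveCluster,
    sumOfNormsObjective_piecewise, add_le_add_iff_right]
    using hx.comp_continuous moveCluster_continuous.continuousAt

end Objective

section Gradient

variable {ι E : Type*} [NormedAddCommGroup E] [InnerProductSpace ℝ E]

theorem hasFDerivAt_half_norm_sub_sq (c z : E) :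
    HasFDerivAt (fun w : E => 1 / 2 * ‖w - c‖ ^ 2) (innerSL ℝ (z - c)) z := by
  refine ((hasFDerivAt_sub_const (x := z) c).norm_sq.const_mul (1 / 2)).congr_fderiv ?_
  ext v
  simp

theorem hasFDerivAt_norm_sub {c z : E} (hz : z ≠ c) :
    HasFDerivAt (fun w : E => ‖w - c‖) (innerSL ℝ (‖z - c‖⁻¹ • (z - c))) z := by
  have norm_sq_ne_zero : ‖z - c‖ ^ 2 ≠ 0 := pow_ne_zero 2 (norm_sub_eq_zero_iff.not.mpr hz)
  have deriv_sqrt := (hasFDerivAt_sub_const (x := z) c).norm_sq.sqrt norm_sq_ne_zero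
  simp only [Real.sqrt_sq (norm_nonneg _)] at deriv_sqrt
  refine deriv_sqrt.congr_fderiv ?_
  ext v
  simp only [ContinuousLinearMap.comp_id, smul_apply, coe_innerSL_apply, nsmul_eq_mul,
    Nat.cast_ofNat, smul_eq_mul, map_smul]
  ring

variable [Fintype ι] [DecidableEq ι]

theorem hasFDerivAt_clusterObjective (a : ι → E) (lam : ℝ) {x : ι → E} {C : Finset ι} {z : E}
    (hz : ∀ j ∉ C, x j ≠ z) :
    HasFDerivAt (clusterObjective a lam x C)
      (innerSL ℝ (∑ i ∈ C, (z - a i) +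
        lam • (#C : ℝ) • ∑ j ∈ Cᶜ, ‖z - x j‖⁻¹ • (z - x j))) z := by
  have fidelity : HasFDerivAt (fun w => 1 / 2 * ∑ i ∈ C, ‖w - a i‖ ^ 2)
      (∑ i ∈ C, innerSL ℝ (z - a i)) z := by
    simp_rw [mul_sum]
    exact HasFDerivAt.fun_sum fun i _ => hasFDerivAt_half_norm_sub_sq (a i) z
  have penalty : HasFDerivAt (fun w => ∑ j ∈ Cᶜ, ‖w - x j‖)
      (∑ j ∈ Cᶜ, innerSL ℝ (‖z - x j‖⁻¹ • (z - x j))) z :=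
    HasFDerivAt.fun_sum fun j hj => hasFDerivAt_norm_sub (hz j (mem_compl.mp hj)).symm
  refine (fidelity.add ((penalty.const_mul (#C : ℝ)).const_mul lam)).congr_fderiv ?_
  simp only [map_add, map_sum, map_smul]

theorem centroid_identity_general {a x : ι → E} {lam : ℝ}
    (hx : IsLocalMin (sumOfNormsObjective a lam) x) {C : Finset ι} (hC : C.Nonempty) {xhat : E}
    (hin : ∀ i ∈ C, x i = xhat) (hout : ∀ i ∉ C, x i ≠ xhat) :
    lam • ∑ j ∈ Cᶜ, ‖xhat - x j‖⁻¹ • (xhat - x j) =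
      -xhat + (#C : ℝ)⁻¹ • ∑ l ∈ C, a l := by
  set u := ∑ j ∈ Cᶜ, ‖xhat - x j‖⁻¹ • (xhat - x j)
  have cast_card_ne_zero : (#C : ℝ) ≠ 0 := Nat.cast_ne_zero.mpr hC.card_ne_zero
  have gradient_eq_zero : ∑ i ∈ C, (xhat - a i) + lam • (#C : ℝ) • u = 0 :=
    (map_eq_zero_iff (innerSL ℝ) fun _ _ => innerSL_inj.mp).mp <|
      (isLocalMin_clusterObjective hx hin).hasFDerivAt_eq_zero
        (hasFDerivAt_clusterObjective a lam hout)
  have sum_eq : ∑ l ∈ C, a l = (#C : ℝ) • (xhat + lam • u) := by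
    rw [sum_sub_distrib, sum_const, ← Nat.cast_smul_eq_nsmul ℝ] at gradient_eq_zero
    linear_combination (norm := module) -gradient_eq_zero
  rw [sum_eq, inv_smul_smul₀ cast_card_ne_zero, neg_add_cancel_left]

end Gradient

/-- Centroid identity for a cluster: if `C` is exactly one cluster with common value
`x̂`, then `λ·Σ_{j∉C} (x̂ − x_j*)/‖x̂ − x_j*‖ = −x̂ + (1/|C|)·Σ_{l∈C} a_l`. -/
theorem centroid_identity
    (d n : ℕ) (a : Fin n → EuclideanSpace ℝ (Fin d)) (lam : ℝ) (hlam : 0 < lam)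
    (x : Fin n → EuclideanSpace ℝ (Fin d))
    (hx : ∀ y : Fin n → EuclideanSpace ℝ (Fin d), sonObjective a lam x ≤ sonObjective a lam y)
    (C : Finset (Fin n)) (hC : C.Nonempty) (xhat : EuclideanSpace ℝ (Fin d))
    (hin : ∀ i ∈ C, x i = xhat) (hout : ∀ i ∉ C, x i ≠ xhat) :
    lam • ∑ j ∈ Cᶜ, ‖xhat - x j‖⁻¹ • (xhat - x j) =
      -xhat + (C.card : ℝ)⁻¹ • ∑ l ∈ C, a l := by
  rw [sonObjective_eq_sumOfNormsObjective] at hx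
  exact centroid_identity_general (Filter.Eventually.of_forall hx) hC hin hout
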